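/- Let n ≥ 3 and let 0 < θ < φ < π/2. Set ω₁ := ω(θ,φ), ψ := φ·(1 − ω₁/π), ω₂ := ω(θ,φ,ψ), and assume φ − ψ ≤ θ ≤ φ + ψ. Then 2·A(n,θ,φ) ≤ A(n−1, min(ω₁,ω₂)) + A(n, ω₁), where A(n−1,·) refers to codes on the unit sphere S^{n−2} ⊂ ℝ^{n−1}. -/

import Mathlib

noncomputable section

/-- The "North pole" `(0, …, 0, 1)` of the unit sphere in `ℝ^n`. -/
def north (n : ℕ) : EuclideanSpace ℝ (Fin n) :=
  if h : 0 < n then EuclideanSpace.single ⟨n - 1, Nat.sub_lt h Nat.one_pos⟩ 1 else 0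

/-- Angular distance between two points: `arccos ⟨x, y⟩`. -/
def aDist {n : ℕ} (x y : EuclideanSpace ℝ (Fin n)) : ℝ := Real.arccos (inner ℝ x y : ℝ)

/-- A finite set of unit vectors with pairwise angular distance at least `θ`. -/
def IsCode {n : ℕ} (θ : ℝ) (C : Finset (EuclideanSpace ℝ (Fin n))) : Prop :=
  (∀ x ∈ C, ‖x‖ = 1) ∧ ∀ x ∈ C, ∀ y ∈ C, x ≠ y → θ ≤ aDist x y

/-- `A(n, θ)`: maximal size of a `θ`-code on the unit sphere `S^{n-1} ⊂ ℝ^n`. -/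
def sphereMax (n : ℕ) (θ : ℝ) : ℕ :=
  sSup {M | ∃ C : Finset (EuclideanSpace ℝ (Fin n)), IsCode θ C ∧ C.card = M}

/-- `A(n, θ, φ)`: maximal size of a `θ`-code in the cap of angular radius `φ` about the
North pole. -/
def capMax (n : ℕ) (θ φ : ℝ) : ℕ :=
  sSup {M | ∃ C : Finset (EuclideanSpace ℝ (Fin n)), IsCode θ C ∧
    (∀ x ∈ C, aDist x (north n) ≤ φ) ∧ C.card = M}

/-- `A(n, θ, [ψ, φ])`: maximal size of a `θ`-code in the strip `Z(n, [ψ, φ])`. -/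
def stripMax (n : ℕ) (θ ψ φ : ℝ) : ℕ :=
  sSup {M | ∃ C : Finset (EuclideanSpace ℝ (Fin n)), IsCode θ C ∧
    (∀ x ∈ C, ψ ≤ aDist x (north n) ∧ aDist x (north n) ≤ φ) ∧ C.card = M}

/-- `m(n, d)`: maximal number of points in the closed unit ball of `ℝ^n` with pairwise
Euclidean distances at least `d`. -/
def ballMax (n : ℕ) (d : ℝ) : ℕ :=
  sSup {M | ∃ C : Finset (EuclideanSpace ℝ (Fin n)), (∀ x ∈ C, ‖x‖ ≤ 1) ∧
    (∀ x ∈ C, ∀ y ∈ C, x ≠ y → d ≤ dist x y) ∧ C.card = M}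

/-- `ω(θ, α, β) = arccos((cos θ - cos α cos β) / (sin α sin β))`. -/
def omega2 (θ α β : ℝ) : ℝ :=
  Real.arccos ((Real.cos θ - Real.cos α * Real.cos β) / (Real.sin α * Real.sin β))

/-- `ω(θ, α) := ω(θ, α, α)`. -/
def omega1 (θ α : ℝ) : ℝ := omega2 θ α α

end

open Real Set Metric
open scoped Finset NNReal

/-! Write each code point in polar coordinates `(r, u)` about the pole, with colatitude `r ≤ φ` and
azimuth `u` in the equatorial sphere, and let `k = π / (2 * φ)`, so that `k * r ≤ π / 2`.

Since `t ↦ sin (k * t) / sin t` is antitone, replacing `r` by `k * r` multiplies squared chords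
by at least `1 / sin φ ^ 2`. Hence it maps a `θ`-code in the cap to an `ω(θ, φ)`-code in the closed
northern hemisphere. The points with `r ≤ ψ` have an image at distance at least `ω(θ, φ) / 2` from
the equator, so their mirror images in the southern hemisphere may be added to the code. The points
with `r > ψ` lie in a strip so thin that their azimuths form a `min ω(θ, φ) ω(θ, φ, ψ)`-code. Thus
the points with `r ≤ ψ` are counted twice by the first code, the other points once by each code. -/

section Trigonometry

theorem mul_cos_mul_mul_sin_le_sin_mul_mul_cos {k x : ℝ} (hk : 1 ≤ k) (hx : 0 ≤ x)
    (hkx : k * x ≤ π) : k * cos (k * x) * sin x ≤ sin (k * x) * cos x := by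
  let f : ℝ → ℝ := fun y ↦ sin (k * y) * cos y - k * cos (k * y) * sin y
  have hderiv (y : ℝ) : HasDerivAt f ((k ^ 2 - 1) * (sin (k * y) * sin y)) y := by
    have hmul : HasDerivAt (fun y : ℝ ↦ k * y) k y := by
      simpa using (hasDerivAt_id y).const_mul k
    refine ((hmul.sin.mul (hasDerivAt_cos y)).sub
      ((hmul.cos.const_mul k).mul (hasDerivAt_sin y))).congr_deriv ?_
    ring
  have hmono : MonotoneOn f (Icc 0 x) := by
    refine monotoneOn_of_hasDerivWithinAt_nonneg (convex_Icc 0 x)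
      (fun y _ ↦ (hderiv y).continuousAt.continuousWithinAt)
      (fun y _ ↦ (hderiv y).hasDerivWithinAt) fun y hy ↦ ?_
    obtain ⟨hy0, hyx⟩ := interior_subset hy
    have hkyπ : k * y ≤ π := by nlinarith
    have hyky : y ≤ k * y := by nlinarith
    have hsin_mul : 0 ≤ sin (k * y) := sin_nonneg_of_nonneg_of_le_pi (by linarith) hkyπ
    have hsin : 0 ≤ sin y := sin_nonneg_of_nonneg_of_le_pi hy0 (by linarith)
    have hk_sq : 0 ≤ k ^ 2 - 1 := by nlinarith
    positivity
  have h0x : f 0 ≤ f x := hmono (left_mem_Icc.2 hx) (right_mem_Icc.2 hx) hx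
  simpa [f] using h0x

theorem antitoneOn_sin_mul_div_sin {k : ℝ} (hk : 1 ≤ k) :
    AntitoneOn (fun x ↦ sin (k * x) / sin x) (Ioo 0 (π / k)) := by
  have hk0 : 0 < k := one_pos.trans_le hk
  have hmul_lt {x : ℝ} (hx : x ∈ Ioo 0 (π / k)) : k * x < π := (lt_div_iff₀' hk0).1 hx.2
  have hsin_pos {x : ℝ} (hx : x ∈ Ioo 0 (π / k)) : 0 < sin x :=
    sin_pos_of_pos_of_lt_pi hx.1 (hx.2.trans_le (div_le_self pi_pos.le hk))
  have hderiv {x : ℝ} (hx : x ∈ Ioo 0 (π / k)) : HasDerivAt (fun x ↦ sin (k * x) / sin x)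
      ((cos (k * x) * k * sin x - sin (k * x) * cos x) / sin x ^ 2) x := by
    have hmul : HasDerivAt (fun x : ℝ ↦ k * x) k x := by
      simpa using (hasDerivAt_id x).const_mul k
    exact hmul.sin.div (hasDerivAt_sin x) (hsin_pos hx).ne'
  refine antitoneOn_of_hasDerivWithinAt_nonpos (convex_Ioo _ _)
    (fun x hx ↦ (hderiv hx).continuousAt.continuousWithinAt)
    (fun x hx ↦ (hderiv (interior_subset hx)).hasDerivWithinAt) fun x hx ↦ ?_
  have hx' := interior_subset hx
  have hnum := mul_cos_mul_mul_sin_le_sin_mul_mul_cos hk hx'.1.le (hmul_lt hx').le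
  exact div_nonpos_of_nonpos_of_nonneg (by linarith) (by positivity)

theorem quasiconcaveOn_mul_cos_add_mul_sin {a : ℝ} (ha : 0 ≤ a) (b : ℝ) :
    QuasiconcaveOn ℝ (Icc 0 (π / 2)) fun r ↦ a * cos r + b * sin r := by
  have hpi := pi_pos
  have hsub_cos : Icc 0 (π / 2) ⊆ Icc (-(π / 2)) (π / 2) := Icc_subset_Icc_left (by linarith)
  have hsub_sin : Icc 0 (π / 2) ⊆ Icc 0 π := Icc_subset_Icc_right (by linarith)
  obtain hb | hb := le_total 0 b
  · have hcos := strictConcaveOn_cos_Icc.concaveOn.subset hsub_cos (convex_Icc _ _)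
    have hsin := strictConcaveOn_sin_Icc.concaveOn.subset hsub_sin (convex_Icc _ _)
    exact ((hcos.smul ha).add (hsin.smul hb)).quasiconcaveOn
  · refine AntitoneOn.quasiconcaveOn (fun r hr s hs hrs ↦ ?_) (convex_Icc _ _)
    have hcos : cos s ≤ cos r := cos_le_cos_of_nonneg_of_le_pi hr.1 (hsub_sin hs).2 hrs
    have hsin : sin r ≤ sin s := sin_le_sin_of_le_of_le_pi_div_two (hsub_cos hr).1 hs.2 hrs
    exact add_le_add (mul_le_mul_of_nonneg_left hcos ha) (mul_le_mul_of_nonpos_left hsin hb)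

end Trigonometry

section Stretching

variable {k φ : ℝ}

theorem sin_le_sin_mul_sin_mul (hφ : φ ≤ π / 2) (hkφ : k * φ = π / 2) {x : ℝ} (hx : 0 ≤ x)
    (hxφ : x ≤ φ) : sin x ≤ sin φ * sin (k * x) := by
  obtain rfl | hx := hx.eq_or_lt
  · simp
  have hφ0 : 0 < φ := hx.trans_le hxφ
  have hk : 1 ≤ k := by nlinarith
  have hφk : φ < π / k := by rw [lt_div_iff₀' (by linarith)]; linarith [pi_pos]
  have hanti := antitoneOn_sin_mul_div_sin hk ⟨hx, hxφ.trans_lt hφk⟩ ⟨hφ0, hφk⟩ hxφ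
  have hsinx : 0 < sin x := sin_pos_of_pos_of_lt_pi hx (by linarith [pi_pos])
  have hsinφ : 0 < sin φ := sin_pos_of_pos_of_lt_pi hφ0 (by linarith [pi_pos])
  simp only [hkφ, sin_pi_div_two] at hanti
  rw [div_le_div_iff₀ hsinφ hsinx] at hanti
  linarith

theorem one_sub_cos_le_sin_sq_mul (hφ : φ ≤ π / 2) (hkφ : k * φ = π / 2) {t : ℝ}
    (ht : |t| ≤ 2 * φ) : 1 - cos t ≤ sin φ ^ 2 * (1 - cos (k * t)) := by
  wlog ht0 : 0 ≤ t generalizing t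
  · simpa using this (t := -t) (by rwa [abs_neg]) (by linarith)
  rw [abs_of_nonneg ht0] at ht
  obtain ⟨x, rfl⟩ : ∃ x, t = 2 * x := ⟨t / 2, by ring⟩
  have hsin_nonneg : 0 ≤ sin x :=
    sin_nonneg_of_nonneg_of_le_pi (by linarith) (by linarith [pi_pos])
  have hsin_sq : sin x ^ 2 ≤ (sin φ * sin (k * x)) ^ 2 :=
    pow_le_pow_left₀ hsin_nonneg
      (sin_le_sin_mul_sin_mul hφ hkφ (by linarith) (by linarith)) 2
  rw [mul_left_comm, cos_two_mul_eq_one_sub, cos_two_mul_eq_one_sub]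
  linarith

end Stretching

section SphericalTriangles

/-- The cosine of the angle opposite to a side of length `θ` in the spherical triangle whose other
two sides have lengths `α` and `β`, as given by the spherical law of cosines; it is the argument of
the `arccos` in `omega2 θ α β`. -/
noncomputable def cosOmega (θ α β : ℝ) : ℝ := (cos θ - cos α * cos β) / (sin α * sin β)

variable {θ φ ψ : ℝ}

theorem cosOmega_comm (θ α β : ℝ) : cosOmega θ α β = cosOmega θ β α := by
  simp only [cosOmega, mul_comm]

theorem cosOmega_le_iff {α β c : ℝ} (hα : 0 < sin α) (hβ : 0 < sin β) :
    cosOmega θ α β ≤ c ↔ cos θ ≤ cos β * cos α + c * sin β * sin α := by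
  rw [cosOmega, div_le_iff₀ (mul_pos hα hβ)]
  constructor <;> intro h <;> linarith

theorem sin_sq_mul_one_sub_cosOmega (hφ : sin φ ≠ 0) :
    sin φ ^ 2 * (1 - cosOmega θ φ φ) = 1 - cos θ := by
  rw [cosOmega]
  field_simp
  linarith [sin_sq_add_cos_sq φ]

theorem cosOmega_lt_one {α β : ℝ} (hα : 0 < sin α) (hβ : 0 < sin β) (hαβ : |α - β| < θ)
    (hθ : θ ≤ π) : cosOmega θ α β < 1 := by
  have hcos : cos θ < cos (α - β) := by
    rw [← cos_abs (α - β)]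
    exact cos_lt_cos_of_nonneg_of_le_pi (abs_nonneg _) hθ hαβ
  rw [cos_sub] at hcos
  rw [cosOmega, div_lt_one (mul_pos hα hβ)]
  linarith

theorem neg_one_lt_cosOmega_self (hθ : 0 ≤ θ) (hθφ : θ < 2 * φ) (hφ : φ ≤ π / 2) :
    -1 < cosOmega θ φ φ := by
  have hsin : 0 < sin φ := sin_pos_of_pos_of_lt_pi (by linarith) (by linarith [pi_pos])
  have hcos : cos (2 * φ) < cos θ := cos_lt_cos_of_nonneg_of_le_pi hθ (by linarith) hθφ
  rw [cos_two_mul'] at hcos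
  rw [cosOmega, lt_div_iff₀ (mul_pos hsin hsin)]
  linarith

theorem cosOmega_self_mono (hψ : 0 < sin ψ) (hψφ : sin ψ ≤ sin φ) :
    cosOmega θ ψ ψ ≤ cosOmega θ φ φ := by
  have hφ : 0 < sin φ := hψ.trans_le hψφ
  have hψ_eq : 1 - cosOmega θ ψ ψ = (1 - cos θ) / sin ψ ^ 2 :=
    eq_div_of_mul_eq (by positivity) (by rw [mul_comm, sin_sq_mul_one_sub_cosOmega hψ.ne'])
  have hφ_eq : 1 - cosOmega θ φ φ = (1 - cos θ) / sin φ ^ 2 :=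
    eq_div_of_mul_eq (by positivity) (by rw [mul_comm, sin_sq_mul_one_sub_cosOmega hφ.ne'])
  have hle : (1 - cos θ) / sin φ ^ 2 ≤ (1 - cos θ) / sin ψ ^ 2 :=
    div_le_div_of_nonneg_left (by linarith [cos_le_one θ]) (by positivity) (by gcongr)
  linarith

theorem quasiconvexOn_cosOmega (θ : ℝ) {β : ℝ} (hβ : β ∈ Ioc 0 (π / 2)) :
    QuasiconvexOn ℝ (Ioc 0 (π / 2)) fun α ↦ cosOmega θ α β := by
  intro c
  have hsin {α : ℝ} (hα : α ∈ Ioc 0 (π / 2)) : 0 < sin α :=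
    sin_pos_of_pos_of_lt_pi hα.1 (hα.2.trans_lt (half_lt_self pi_pos))
  have hcosβ : 0 ≤ cos β :=
    cos_nonneg_of_neg_pi_div_two_le_of_le (by linarith [hβ.1, pi_pos]) hβ.2
  have hset : {α ∈ Ioc 0 (π / 2) | cosOmega θ α β ≤ c} = Ioc 0 (π / 2) ∩
      {α ∈ Icc 0 (π / 2) | cos θ ≤ cos β * cos α + c * sin β * sin α} := by
    ext α
    constructor
    · rintro ⟨hα, hle⟩
      exact ⟨hα, Ioc_subset_Icc_self hα, (cosOmega_le_iff (hsin hα) (hsin hβ)).1 hle⟩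
    · rintro ⟨hα, -, hle⟩
      exact ⟨hα, (cosOmega_le_iff (hsin hα) (hsin hβ)).2 hle⟩
  rw [hset]
  exact (convex_Ioc _ _).inter (quasiconcaveOn_mul_cos_add_mul_sin hcosβ (c * sin β) (cos θ))

theorem cosOmega_le_max_of_mem_Icc (hψ : 0 < ψ) (hφ : φ ≤ π / 2) {r s : ℝ} (hr : r ∈ Icc ψ φ)
    (hs : s ∈ Icc ψ φ) : cosOmega θ r s ≤ max (cosOmega θ φ φ) (cosOmega θ φ ψ) := by
  set c := max (cosOmega θ φ φ) (cosOmega θ φ ψ)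
  have hψφ : ψ ≤ φ := hr.1.trans hr.2
  have hψ_mem : ψ ∈ Ioc 0 (π / 2) := ⟨hψ, hψφ.trans hφ⟩
  have hφ_mem : φ ∈ Ioc 0 (π / 2) := ⟨hψ.trans_le hψφ, hφ⟩
  have hs_mem : s ∈ Ioc 0 (π / 2) := ⟨hψ.trans_le hs.1, hs.2.trans hφ⟩
  have hφφ : cosOmega θ φ φ ≤ c := le_max_left _ _
  have hφψ : cosOmega θ φ ψ ≤ c := le_max_right _ _
  have hψψ : cosOmega θ ψ ψ ≤ c := by
    have hsinψ : 0 < sin ψ := sin_pos_of_pos_of_lt_pi hψ (by linarith [pi_pos])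
    have hsin : sin ψ ≤ sin φ :=
      sin_le_sin_of_le_of_le_pi_div_two (by linarith [pi_pos]) hφ hψφ
    exact (cosOmega_self_mono hsinψ hsin).trans hφφ
  have hinterp {β : ℝ} (hβ : β ∈ Ioc 0 (π / 2)) (h₁ : cosOmega θ ψ β ≤ c)
      (h₂ : cosOmega θ φ β ≤ c) {α : ℝ} (hα : α ∈ Icc ψ φ) : cosOmega θ α β ≤ c :=
    ((quasiconvexOn_cosOmega θ hβ c).ordConnected.out ⟨hψ_mem, h₁⟩ ⟨hφ_mem, h₂⟩ hα).2
  have hsψ : cosOmega θ s ψ ≤ c := hinterp hψ_mem hψψ hφψ hs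
  have hsφ : cosOmega θ s φ ≤ c := hinterp hφ_mem (cosOmega_comm θ φ ψ ▸ hφψ) hφφ hs
  exact hinterp hs_mem (cosOmega_comm θ s ψ ▸ hsψ) (cosOmega_comm θ s φ ▸ hsφ) hr

theorem min_omega_le_omega2_of_mem_Icc (hψ : 0 < ψ) (hφ : φ ≤ π / 2) {r s : ℝ}
    (hr : r ∈ Icc ψ φ) (hs : s ∈ Icc ψ φ) :
    min (omega1 θ φ) (omega2 θ φ ψ) ≤ omega2 θ r s :=
  antitone_arccos.map_max.symm.trans_le
    (arccos_le_arccos (cosOmega_le_max_of_mem_Icc hψ hφ hr hs))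

theorem omega2_pos {α β : ℝ} (hα : 0 < sin α) (hβ : 0 < sin β) (hαβ : |α - β| < θ)
    (hθ : θ ≤ π) : 0 < omega2 θ α β :=
  arccos_pos.2 (cosOmega_lt_one hα hβ hαβ hθ)

theorem lt_two_mul_of_le_add_mul_one_sub_omega1_div_pi (hθ : 0 < θ) (hφ : φ ≤ π / 2)
    (h : θ ≤ φ + φ * (1 - omega1 θ φ / π)) : θ < 2 * φ := by
  have hω0 : 0 ≤ omega1 θ φ / π := div_nonneg (arccos_nonneg _) pi_pos.le
  have hω1 : omega1 θ φ / π ≤ 1 := (div_le_one pi_pos).2 (arccos_le_pi _)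
  have hφ0 : 0 < φ := by nlinarith
  have hθπ : θ ≤ π := by nlinarith
  have hsin : 0 < sin φ := sin_pos_of_pos_of_lt_pi hφ0 (by linarith [pi_pos])
  have hω : 0 < omega1 θ φ := omega2_pos hsin hsin (by simpa using hθ) hθπ
  have hgap : 0 < φ * (omega1 θ φ / π) := by positivity
  linarith

theorem omega1_lt_pi (hθ : 0 ≤ θ) (hθφ : θ < 2 * φ) (hφ : φ ≤ π / 2) : omega1 θ φ < π :=
  arccos_lt_pi.2 (neg_one_lt_cosOmega_self hθ hθφ hφ)

theorem cos_omega1 (hθ : 0 < θ) (hθφ : θ < 2 * φ) (hφ : φ ≤ π / 2) :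
    cos (omega1 θ φ) = cosOmega θ φ φ := by
  have hsin : 0 < sin φ := sin_pos_of_pos_of_lt_pi (by linarith) (by linarith [pi_pos])
  exact cos_arccos (neg_one_lt_cosOmega_self hθ.le hθφ hφ).le
    (cosOmega_lt_one hsin hsin (by simpa using hθ) (by linarith)).le

theorem omega1_le_mul {k : ℝ} (hθ : 0 < θ) (hθφ : θ < 2 * φ) (hφ : φ ≤ π / 2)
    (hkφ : k * φ = π / 2) : omega1 θ φ ≤ k * θ := by
  have hφ0 : 0 < φ := by linarith
  have hk : 0 < k := pos_of_mul_pos_left (by rw [hkφ]; positivity) hφ0.le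
  have hsin : 0 < sin φ := sin_pos_of_pos_of_lt_pi hφ0 (by linarith [pi_pos])
  have hstretch := one_sub_cos_le_sin_sq_mul hφ hkφ (abs_le.2 ⟨by linarith, hθφ.le⟩ : |θ| ≤ 2 * φ)
  rw [← sin_sq_mul_one_sub_cosOmega hsin.ne'] at hstretch
  have hcos : cos (k * θ) ≤ cosOmega θ φ φ := by
    linarith [le_of_mul_le_mul_left hstretch (by positivity)]
  calc omega1 θ φ ≤ arccos (cos (k * θ)) := arccos_le_arccos hcos
    _ = k * θ := arccos_cos (by positivity) (by nlinarith)

end SphericalTriangles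

section Codes

variable {n : ℕ} {θ ω : ℝ}

theorem le_aDist_of_inner_le_cos {x y : EuclideanSpace ℝ (Fin n)} (hω : 0 ≤ ω) (hωπ : ω ≤ π)
    (h : inner ℝ x y ≤ cos ω) : ω ≤ aDist x y :=
  (arccos_cos hω hωπ).symm.trans_le (arccos_le_arccos h)

theorem IsCode.inner_le_cos {C : Finset (EuclideanSpace ℝ (Fin n))} (hC : IsCode θ C)
    (hθ : 0 ≤ θ) {x y : EuclideanSpace ℝ (Fin n)} (hx : x ∈ C) (hy : y ∈ C) (hxy : x ≠ y) :
    inner ℝ x y ≤ cos θ := by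
  obtain ⟨hlo, hhi⟩ := real_inner_mem_Icc_of_norm_eq_one (hC.1 x hx) (hC.1 y hy)
  calc inner ℝ x y = cos (aDist x y) := (cos_arccos hlo hhi).symm
    _ ≤ cos θ := cos_le_cos_of_nonneg_of_le_pi hθ (arccos_le_pi _) (hC.2 x hx y hy hxy)

theorem IsCode.filter {C : Finset (EuclideanSpace ℝ (Fin n))} (hC : IsCode θ C)
    (p : EuclideanSpace ℝ (Fin n) → Prop) [DecidablePred p] : IsCode θ (C.filter p) :=
  ⟨fun x hx ↦ hC.1 x (Finset.mem_of_mem_filter x hx), fun x hx y hy ↦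
    hC.2 x (Finset.mem_of_mem_filter x hx) y (Finset.mem_of_mem_filter y hy)⟩

theorem packingNumber_ne_top_of_isCompact {X : Type*} [PseudoEMetricSpace X] {ε : ℝ≥0}
    {s : Set X} (hε : ε ≠ 0) (hs : IsCompact s) : packingNumber ε s ≠ ⊤ := by
  obtain ⟨N, -, hN, hcover⟩ := exists_finite_isCover_of_isCompact (half_pos hε.bot_lt).ne' hs
  have hle : packingNumber (2 * (ε / 2)) s ≤ N.encard :=
    (packingNumber_two_mul_le_externalCoveringNumber _ s).trans
      hcover.externalCoveringNumber_le_encard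
  rw [mul_div_cancel₀ ε two_ne_zero] at hle
  exact ne_top_of_le_ne_top hN.encard_lt_top.ne hle

theorem IsCode.isSeparated {C : Finset (EuclideanSpace ℝ (Fin n))} (hC : IsCode θ C)
    (hθ : 0 < θ) (hθπ : θ ≤ π) :
    IsSeparated (ENNReal.ofReal √(1 - cos θ)) (C : Set (EuclideanSpace ℝ (Fin n))) := by
  intro x hx y hy hxy
  have hcos : cos θ < 1 := cos_zero ▸ cos_lt_cos_of_nonneg_of_le_pi le_rfl hθπ hθ
  have hdist_sq : dist x y ^ 2 = 2 * (1 - inner ℝ x y) := by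
    rw [dist_eq_norm, norm_sub_sq_real, hC.1 x hx, hC.1 y hy]
    ring
  have hinner := hC.inner_le_cos hθ.le hx hy hxy
  rw [edist_dist, ENNReal.ofReal_lt_ofReal_iff (dist_pos.2 hxy), sqrt_lt' (dist_pos.2 hxy)]
  linarith

theorem bddAbove_card_isCode (n : ℕ) (hθ : 0 < θ) (hθπ : θ ≤ π) :
    BddAbove {M | ∃ C : Finset (EuclideanSpace ℝ (Fin n)), IsCode θ C ∧ #C = M} := by
  have hcos : cos θ < 1 := cos_zero ▸ cos_lt_cos_of_nonneg_of_le_pi le_rfl hθπ hθ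
  have hε : (√(1 - cos θ)).toNNReal ≠ 0 := (toNNReal_pos.2 (sqrt_pos.2 (by linarith))).ne'
  have hfin := packingNumber_ne_top_of_isCompact hε
    (isCompact_sphere (0 : EuclideanSpace ℝ (Fin n)) 1)
  refine ⟨(packingNumber (√(1 - cos θ)).toNNReal (sphere (0 : EuclideanSpace ℝ (Fin n)) 1)).toNat,
    ?_⟩
  rintro _ ⟨C, hC, rfl⟩
  have hsub : (C : Set (EuclideanSpace ℝ (Fin n))) ⊆ sphere 0 1 :=
    fun x hx ↦ mem_sphere_zero_iff_norm.2 (hC.1 x hx)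
  have hle := (hC.isSeparated hθ hθπ).encard_le_packingNumber hsub
  rw [Set.encard_coe_eq_coe_finsetCard] at hle
  exact ENat.toNat_le_toNat hle hfin

theorem card_le_sphereMax {ι : Type*} {s : Finset ι} {f : ι → EuclideanSpace ℝ (Fin n)}
    (hω : 0 < ω) (hωπ : ω ≤ π) (hnorm : ∀ i ∈ s, ‖f i‖ = 1)
    (hsep : ∀ i ∈ s, ∀ j ∈ s, i ≠ j → ω ≤ aDist (f i) (f j)) : #s ≤ sphereMax n ω := by
  classical
  have hinj : InjOn f s := by
    intro i hi j hj hij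
    by_contra hne
    have hdist : aDist (f i) (f j) = 0 := by
      rw [hij, aDist, inner_self_eq_one_of_norm_eq_one (hnorm j hj), arccos_one]
    linarith [hsep i hi j hj hne]
  refine le_csSup (bddAbove_card_isCode n hω hωπ)
    ⟨s.image f, ⟨?_, ?_⟩, Finset.card_image_of_injOn hinj⟩
  · exact Finset.forall_mem_image.2 hnorm
  · refine Finset.forall_mem_image.2 fun i hi ↦ Finset.forall_mem_image.2 fun j hj hne ↦ ?_
    exact hsep i hi j hj (ne_of_apply_ne f hne)

end Codes

section PolarCoordinates

variable {m : ℕ}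

/-- The point of `ℝ^(m+1)` with colatitude `r` and azimuth `u`, that is
`(sin r • u, cos r)`. -/
noncomputable def polarPoint (r : ℝ) (u : EuclideanSpace ℝ (Fin m)) :
    EuclideanSpace ℝ (Fin (m + 1)) :=
  WithLp.toLp 2 (Fin.snoc (α := fun _ ↦ ℝ) (fun i ↦ sin r * u i) (cos r))

/-- The orthogonal projection of a point of `ℝ^(m+1)` to the equatorial hyperplane `ℝ^m`. -/
def equatorialPart (x : EuclideanSpace ℝ (Fin (m + 1))) : EuclideanSpace ℝ (Fin m) :=
  WithLp.toLp 2 fun i ↦ x i.castSucc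

/-- The unit vector in the direction of the projection of `x` to the equatorial hyperplane, with an
arbitrary choice if `x` lies on the polar axis. -/
noncomputable def azimuth [NeZero m] (x : EuclideanSpace ℝ (Fin (m + 1))) :
    EuclideanSpace ℝ (Fin m) :=
  if equatorialPart x = 0 then EuclideanSpace.single 0 1
  else NormedSpace.normalize (equatorialPart x)

theorem inner_polarPoint (r s : ℝ) (u v : EuclideanSpace ℝ (Fin m)) :
    inner ℝ (polarPoint r u) (polarPoint s v) =
      sin r * sin s * inner ℝ u v + cos r * cos s := by
  simp only [PiLp.inner_apply, polarPoint, Fin.sum_univ_castSucc, Fin.snoc_castSucc, Fin.snoc_last,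
    Finset.mul_sum, RCLike.inner_apply, conj_trivial]
  congr 1
  · exact Finset.sum_congr rfl fun i _ ↦ by ring
  · ring

theorem norm_polarPoint (r : ℝ) {u : EuclideanSpace ℝ (Fin m)} (hu : ‖u‖ = 1) :
    ‖polarPoint r u‖ = 1 := by
  rw [← sq_eq_sq₀ (norm_nonneg _) zero_le_one, ← real_inner_self_eq_norm_sq, inner_polarPoint,
    inner_self_eq_one_of_norm_eq_one hu]
  linarith [sin_sq_add_cos_sq r]

theorem inner_polarPoint_pi_sub_le {r s : ℝ} (hr : 0 ≤ cos r) (hs : 0 ≤ cos s)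
    (u v : EuclideanSpace ℝ (Fin m)) :
    inner ℝ (polarPoint r u) (polarPoint (π - s) v) ≤
      inner ℝ (polarPoint r u) (polarPoint s v) := by
  rw [inner_polarPoint, inner_polarPoint, sin_pi_sub, cos_pi_sub]
  linarith [mul_nonneg hr hs]

theorem inner_polarPoint_pi_sub_self (r : ℝ) {u : EuclideanSpace ℝ (Fin m)} (hu : ‖u‖ = 1) :
    inner ℝ (polarPoint r u) (polarPoint (π - r) u) = -cos (2 * r) := by
  rw [inner_polarPoint, sin_pi_sub, cos_pi_sub, inner_self_eq_one_of_norm_eq_one hu, cos_two_mul']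
  ring

theorem inner_polarPoint_pi_sub_pi_sub (r s : ℝ) (u v : EuclideanSpace ℝ (Fin m)) :
    inner ℝ (polarPoint (π - r) u) (polarPoint (π - s) v) =
      inner ℝ (polarPoint r u) (polarPoint s v) := by
  simp only [inner_polarPoint, sin_pi_sub, cos_pi_sub, neg_mul_neg]

theorem omega2_le_aDist_of_inner_polarPoint_le_cos {θ r s : ℝ} {u v : EuclideanSpace ℝ (Fin m)}
    (hr : 0 < sin r) (hs : 0 < sin s)
    (h : inner ℝ (polarPoint r u) (polarPoint s v) ≤ cos θ) : omega2 θ r s ≤ aDist u v := by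
  rw [inner_polarPoint] at h
  refine arccos_le_arccos ((le_div_iff₀ (mul_pos hr hs)).2 ?_)
  linarith

theorem aDist_north (x : EuclideanSpace ℝ (Fin (m + 1))) :
    aDist x (north (m + 1)) = arccos (x (Fin.last m)) := by
  have hnorth : north (m + 1) = EuclideanSpace.single (Fin.last m) 1 := by simp [north, Fin.last]
  simp [aDist, hnorth, EuclideanSpace.inner_single_right]

theorem norm_equatorialPart_sq_add (x : EuclideanSpace ℝ (Fin (m + 1))) :
    ‖equatorialPart x‖ ^ 2 + x (Fin.last m) ^ 2 = ‖x‖ ^ 2 := by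
  rw [EuclideanSpace.real_norm_sq_eq, EuclideanSpace.real_norm_sq_eq, Fin.sum_univ_castSucc]
  rfl

variable [NeZero m]

theorem norm_azimuth (x : EuclideanSpace ℝ (Fin (m + 1))) : ‖azimuth x‖ = 1 := by
  rw [azimuth]
  split_ifs with h
  · simp
  · exact NormedSpace.norm_normalize h

theorem norm_equatorialPart_smul_azimuth (x : EuclideanSpace ℝ (Fin (m + 1))) :
    ‖equatorialPart x‖ • azimuth x = equatorialPart x := by
  rw [azimuth]
  split_ifs with h
  · simp [h]
  · exact NormedSpace.norm_smul_normalize _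

theorem polarPoint_azimuth {x : EuclideanSpace ℝ (Fin (m + 1))} (hx : ‖x‖ = 1) :
    polarPoint (aDist x (north (m + 1))) (azimuth x) = x := by
  have hsq : ‖equatorialPart x‖ ^ 2 + x (Fin.last m) ^ 2 = 1 := by
    rw [norm_equatorialPart_sq_add, hx, one_pow]
  have hsin : sin (aDist x (north (m + 1))) = ‖equatorialPart x‖ := by
    rw [aDist_north, sin_arccos, ← eq_sub_of_add_eq hsq, sqrt_sq (norm_nonneg _)]
  have hcos : cos (aDist x (north (m + 1))) = x (Fin.last m) := by
    have habs : |x (Fin.last m)| ≤ 1 := by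
      rw [← sq_le_one_iff_abs_le_one]
      linarith [sq_nonneg ‖equatorialPart x‖]
    rw [aDist_north, cos_arccos (abs_le.1 habs).1 (abs_le.1 habs).2]
  ext i
  refine Fin.lastCases ?_ (fun j ↦ ?_) i
  · simp only [polarPoint, Fin.snoc_last, hcos]
  · simp only [polarPoint, Fin.snoc_castSucc, hsin]
    exact congrArg (fun v ↦ v j) (norm_equatorialPart_smul_azimuth x)

theorem IsCode.inner_polarPoint_azimuth_le_cos {θ : ℝ}
    {C : Finset (EuclideanSpace ℝ (Fin (m + 1)))} (hC : IsCode θ C) (hθ : 0 ≤ θ)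
    {x y : EuclideanSpace ℝ (Fin (m + 1))} (hx : x ∈ C) (hy : y ∈ C) (hxy : x ≠ y) :
    inner ℝ (polarPoint (aDist x (north (m + 1))) (azimuth x))
      (polarPoint (aDist y (north (m + 1))) (azimuth y)) ≤ cos θ := by
  rw [polarPoint_azimuth (hC.1 x hx), polarPoint_azimuth (hC.1 y hy)]
  exact hC.inner_le_cos hθ hx hy hxy

end PolarCoordinates

section CapCodes

variable {m : ℕ} {k θ φ ψ : ℝ}

theorem IsCode.card_le_sphereMax_of_strip [NeZero m] {C : Finset (EuclideanSpace ℝ (Fin (m + 1)))}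
    (hC : IsCode θ C) (hψ : 0 < ψ) (hψφ : ψ ≤ φ) (hφ : φ ≤ π / 2) (hθ : φ - ψ < θ) (hθπ : θ ≤ π)
    (hstrip : ∀ x ∈ C, aDist x (north (m + 1)) ∈ Icc ψ φ) :
    #C ≤ sphereMax m (min (omega1 θ φ) (omega2 θ φ ψ)) := by
  have hθ0 : 0 < θ := by linarith
  have hsin {r : ℝ} (hr : r ∈ Icc ψ φ) : 0 < sin r :=
    sin_pos_of_pos_of_lt_pi (hψ.trans_le hr.1) (by linarith [hr.2, pi_pos])
  have hsinφ := hsin (right_mem_Icc.2 hψφ)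
  have hsinψ := hsin (left_mem_Icc.2 hψφ)
  have hω₁ : 0 < omega1 θ φ := omega2_pos hsinφ hsinφ (by simpa using hθ0) hθπ
  have hω₂ : 0 < omega2 θ φ ψ :=
    omega2_pos hsinφ hsinψ (by rwa [abs_of_nonneg (by linarith)]) hθπ
  refine card_le_sphereMax (lt_min hω₁ hω₂) ((min_le_left _ _).trans (arccos_le_pi _))
    (fun x _ ↦ norm_azimuth x) fun x hx y hy hxy ↦ ?_
  calc min (omega1 θ φ) (omega2 θ φ ψ)
      ≤ omega2 θ (aDist x (north (m + 1))) (aDist y (north (m + 1))) :=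
        min_omega_le_omega2_of_mem_Icc hψ hφ (hstrip x hx) (hstrip y hy)
    _ ≤ aDist (azimuth x) (azimuth y) :=
        omega2_le_aDist_of_inner_polarPoint_le_cos (hsin (hstrip x hx)) (hsin (hstrip y hy))
          (hC.inner_polarPoint_azimuth_le_cos hθ0.le hx hy hxy)

theorem card_add_card_le_sphereMax_of_hemisphere {ι : Type*} {s t : Finset ι} {r : ι → ℝ}
    {u : ι → EuclideanSpace ℝ (Fin m)} {ω : ℝ} (hω : 0 < ω) (hωπ : ω ≤ π) (hts : t ⊆ s)
    (hu : ∀ i ∈ s, ‖u i‖ = 1) (hr : ∀ i ∈ s, r i ∈ Icc 0 (π / 2))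
    (hrt : ∀ i ∈ t, 2 * r i ≤ π - ω)
    (hsep : ∀ i ∈ s, ∀ j ∈ s, i ≠ j →
      inner ℝ (polarPoint (r i) (u i)) (polarPoint (r j) (u j)) ≤ cos ω) :
    #s + #t ≤ sphereMax (m + 1) ω := by
  have hcos (i : ι) (hi : i ∈ s) : 0 ≤ cos (r i) :=
    cos_nonneg_of_neg_pi_div_two_le_of_le (by linarith [(hr i hi).1, pi_pos]) (hr i hi).2
  have hmirror (i : ι) (hi : i ∈ s) (j : ι) (hj : j ∈ t) :
      inner ℝ (polarPoint (r i) (u i)) (polarPoint (π - r j) (u j)) ≤ cos ω := by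
    obtain rfl | hij := eq_or_ne i j
    · rw [inner_polarPoint_pi_sub_self _ (hu i hi), ← cos_pi_sub]
      exact cos_le_cos_of_nonneg_of_le_pi hω.le (by linarith [(hr i hi).1]) (by linarith [hrt i hj])
    · exact (inner_polarPoint_pi_sub_le (hcos i hi) (hcos j (hts hj)) _ _).trans
        (hsep i hi j (hts hj) hij)
  rw [← Finset.card_disjSum]
  refine card_le_sphereMax (f := Sum.elim (fun i ↦ polarPoint (r i) (u i))
    fun i ↦ polarPoint (π - r i) (u i)) hω hωπ ?_ fun i hi j hj hij ↦
      le_aDist_of_inner_le_cos hω.le hωπ ?_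
  · rintro (i | i) hi
    · exact norm_polarPoint _ (hu i (Finset.inl_mem_disjSum.1 hi))
    · exact norm_polarPoint _ (hu i (hts (Finset.inr_mem_disjSum.1 hi)))
  · obtain i | i := i <;> obtain j | j := j <;>
      simp only [Finset.inl_mem_disjSum, Finset.inr_mem_disjSum] at hi hj
    · exact hsep i hi j hj (ne_of_apply_ne Sum.inl hij)
    · exact hmirror i hi j hj
    · rw [real_inner_comm]
      exact hmirror j hj i hi
    · exact (inner_polarPoint_pi_sub_pi_sub _ _ _ _).trans_le
        (hsep i (hts hi) j (hts hj) (ne_of_apply_ne Sum.inr hij))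

theorem one_sub_inner_polarPoint_le_sin_sq_mul (hφ : φ ≤ π / 2) (hkφ : k * φ = π / 2) {r s : ℝ}
    (hr : r ∈ Icc 0 φ) (hs : s ∈ Icc 0 φ) {u v : EuclideanSpace ℝ (Fin m)} (hu : ‖u‖ = 1)
    (hv : ‖v‖ = 1) :
    1 - inner ℝ (polarPoint r u) (polarPoint s v) ≤
      sin φ ^ 2 * (1 - inner ℝ (polarPoint (k * r) u) (polarPoint (k * s) v)) := by
  have hdiff : 1 - cos (r - s) ≤ sin φ ^ 2 * (1 - cos (k * r - k * s)) := by
    rw [← mul_sub]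
    exact one_sub_cos_le_sin_sq_mul hφ hkφ
      (abs_le.2 ⟨by linarith [hr.1, hs.1, hs.2], by linarith [hr.1, hr.2, hs.1]⟩)
  have hsin {x : ℝ} (hx : x ∈ Icc 0 φ) : 0 ≤ sin x :=
    sin_nonneg_of_nonneg_of_le_pi hx.1 (by linarith [hx.2, pi_pos])
  have hle {x : ℝ} (hx : x ∈ Icc 0 φ) : sin x ≤ sin φ * sin (k * x) :=
    sin_le_sin_mul_sin_mul hφ hkφ hx.1 hx.2
  have hprod : sin r * sin s ≤ sin φ * sin (k * r) * (sin φ * sin (k * s)) :=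
    mul_le_mul (hle hr) (hle hs) (hsin hs) ((hsin hr).trans (hle hr))
  have hprod' := mul_le_mul_of_nonneg_right hprod
    (sub_nonneg.2 (real_inner_le_one_of_norm_eq_one hu hv))
  rw [cos_sub, cos_sub] at hdiff
  rw [inner_polarPoint, inner_polarPoint]
  linarith

theorem inner_polarPoint_mul_le_cos_omega1 (hθ : 0 < θ) (hθφ : θ < 2 * φ) (hφ : φ ≤ π / 2)
    (hkφ : k * φ = π / 2) {r s : ℝ} (hr : r ∈ Icc 0 φ) (hs : s ∈ Icc 0 φ)
    {u v : EuclideanSpace ℝ (Fin m)} (hu : ‖u‖ = 1) (hv : ‖v‖ = 1)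
    (h : inner ℝ (polarPoint r u) (polarPoint s v) ≤ cos θ) :
    inner ℝ (polarPoint (k * r) u) (polarPoint (k * s) v) ≤ cos (omega1 θ φ) := by
  have hsin : 0 < sin φ := sin_pos_of_pos_of_lt_pi (by linarith) (by linarith [pi_pos])
  have hchord : sin φ ^ 2 * (1 - cosOmega θ φ φ) ≤
      sin φ ^ 2 * (1 - inner ℝ (polarPoint (k * r) u) (polarPoint (k * s) v)) := by
    rw [sin_sq_mul_one_sub_cosOmega hsin.ne']
    linarith [one_sub_inner_polarPoint_le_sin_sq_mul hφ hkφ hr hs hu hv]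
  rw [cos_omega1 hθ hθφ hφ]
  linarith [le_of_mul_le_mul_left hchord (by positivity)]

theorem IsCode.card_add_card_filter_le_sphereMax [NeZero m]
    {C : Finset (EuclideanSpace ℝ (Fin (m + 1)))} (hC : IsCode θ C) (hθ : 0 < θ)
    (hθφ : θ < 2 * φ) (hφ : φ ≤ π / 2) (hcap : ∀ x ∈ C, aDist x (north (m + 1)) ≤ φ) :
    #C + #(C.filter fun x ↦ aDist x (north (m + 1)) ≤ φ * (1 - omega1 θ φ / π)) ≤
      sphereMax (m + 1) (omega1 θ φ) := by
  have hφ0 : 0 < φ := by linarith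
  have hsin : 0 < sin φ := sin_pos_of_pos_of_lt_pi hφ0 (by linarith [pi_pos])
  set k := π / (2 * φ) with hk
  have hk0 : 0 < k := by positivity
  have hkφ : k * φ = π / 2 := by rw [hk]; field_simp
  have hcap' (x) (hx : x ∈ C) : aDist x (north (m + 1)) ∈ Icc 0 φ :=
    ⟨arccos_nonneg _, hcap x hx⟩
  refine card_add_card_le_sphereMax_of_hemisphere
    (r := fun x ↦ k * aDist x (north (m + 1))) (u := azimuth)
    (omega2_pos hsin hsin (by simpa using hθ) (by linarith)) (arccos_le_pi _)
    (Finset.filter_subset _ C) (fun x _ ↦ norm_azimuth x) (fun x hx ↦ ⟨?_, ?_⟩) (fun x hx ↦ ?_)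
    fun x hx y hy hxy ↦ ?_
  · exact mul_nonneg hk0.le (hcap' x hx).1
  · exact hkφ ▸ mul_le_mul_of_nonneg_left (hcap x hx) hk0.le
  · calc 2 * (k * aDist x (north (m + 1)))
        ≤ 2 * (k * (φ * (1 - omega1 θ φ / π))) := by
          gcongr
          exact (Finset.mem_filter.1 hx).2
      _ = π - omega1 θ φ := by
          rw [← mul_assoc k, hkφ]
          field_simp
  · exact inner_polarPoint_mul_le_cos_omega1 hθ hθφ hφ hkφ (hcap' x hx) (hcap' y hy)
      (norm_azimuth x) (norm_azimuth y) (hC.inner_polarPoint_azimuth_le_cos hθ.le hx hy hxy)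

end CapCodes

theorem capMax_le {n N : ℕ} {θ φ : ℝ}
    (h : ∀ C : Finset (EuclideanSpace ℝ (Fin n)), IsCode θ C →
      (∀ x ∈ C, aDist x (north n) ≤ φ) → #C ≤ N) : capMax n θ φ ≤ N :=
  csSup_le' <| by
    rintro _ ⟨C, hC, hcap, rfl⟩
    exact h C hC hcap

theorem stmt19_general (n : ℕ) (hn : 2 ≤ n) (θ φ : ℝ) (hθ : 0 < θ) (hφ : φ ≤ π / 2)
    (ψ : ℝ) (hψ : ψ = φ * (1 - omega1 θ φ / π)) (hhi : θ ≤ φ + ψ) :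
    2 * capMax n θ φ ≤
      sphereMax (n - 1) (min (omega1 θ φ) (omega2 θ φ ψ)) + sphereMax n (omega1 θ φ) := by
  obtain ⟨m, rfl⟩ : ∃ m, n = m + 1 := ⟨n - 1, by omega⟩
  have : NeZero m := ⟨by omega⟩
  have hθφ : θ < 2 * φ := lt_two_mul_of_le_add_mul_one_sub_omega1_div_pi hθ hφ (hψ ▸ hhi)
  have hφ0 : 0 < φ := by linarith
  have hgap : φ - ψ = φ * (omega1 θ φ / π) := by rw [hψ]; ring
  have hψ0 : 0 < ψ :=
    hψ ▸ mul_pos hφ0 (sub_pos.2 ((div_lt_one pi_pos).2 (omega1_lt_pi hθ.le hθφ hφ)))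
  have hψφ : ψ ≤ φ :=
    sub_nonneg.1 (hgap ▸ mul_nonneg hφ0.le (div_nonneg (arccos_nonneg _) pi_pos.le))
  have hthin : φ - ψ < θ := by
    have hω := omega1_le_mul hθ hθφ hφ (by field_simp : π / (2 * φ) * φ = π / 2)
    calc φ - ψ = φ * (omega1 θ φ / π) := hgap
      _ ≤ φ * (π / (2 * φ) * θ / π) := by gcongr
      _ = θ / 2 := by field_simp
      _ < θ := half_lt_self hθ
  suffices capMax (m + 1) θ φ ≤ (sphereMax m (min (omega1 θ φ) (omega2 θ φ ψ)) +
      sphereMax (m + 1) (omega1 θ φ)) / 2 by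
    rw [Nat.add_sub_cancel]
    omega
  refine capMax_le fun C hC hcap ↦ ?_
  have hdouble := hC.card_add_card_filter_le_sphereMax hθ hθφ hφ hcap
  have hstrip := (hC.filter fun x ↦ ¬ aDist x (north (m + 1)) ≤ ψ).card_le_sphereMax_of_strip hψ0
    hψφ hφ hthin (by linarith) fun x hx ↦
      ⟨(not_le.1 (Finset.mem_filter.1 hx).2).le, hcap x (Finset.mem_filter.1 hx).1⟩
  have hsplit := C.card_filter_add_card_filter_not fun x ↦ aDist x (north (m + 1)) ≤ ψ
  rw [← hψ] at hdouble
  omega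

theorem stmt19 (n : ℕ) (hn : 3 ≤ n) (θ φ : ℝ) (hθ : 0 < θ) (hθφ : θ < φ)
    (hφ : φ < Real.pi / 2) (ψ : ℝ) (hψ : ψ = φ * (1 - omega1 θ φ / Real.pi))
    (hlo : φ - ψ ≤ θ) (hhi : θ ≤ φ + ψ) :
    2 * capMax n θ φ ≤
      sphereMax (n - 1) (min (omega1 θ φ) (omega2 θ φ ψ)) + sphereMax n (omega1 θ φ) :=
  stmt19_general n (by omega) θ φ hθ hφ.le ψ hψ hhi
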